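/- Let X be a real Banach space and let F : X → ℝ be a locally Lipschitz functional. Then the function λ_F : X → ℝ, λ_F(x) = min_{w* ∈ ∂F(x)} ‖w*‖_{X*}, is lower semicontinuous; moreover, for any continuous nondecreasing h : [0,∞) → [0,∞), the function x ↦ λ_F(x)(1 + h(‖x‖)) is lower semicontinuous. -/

import Mathlib

/-!
Lower semicontinuity of `λ_F` is a weak-* compactness argument. If `λ_F y ≤ c` for `y` arbitrarily
close to `x`, there are `w_y ∈ ∂F(y)` with `‖w_y‖ ≤ c + ε`; by Banach–Alaoglu these have a weak-*
limit `w` along an ultrafilter finer than `𝓝 x`, with `‖w‖ ≤ c + ε`. Since `y ↦ F⁰(y; v)` is upper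
semicontinuous (`eventually_clarkeDeriv_le`), `w ∈ ∂F(x)`, so `λ_F x ≤ c + ε` for every `ε > 0`.

The choice of `w_y` uses that `∂F(y)` is nonempty (`clarkeSubdiff_nonempty`): `F⁰(y; ·)` is
sublinear and bounded by `K ‖·‖`, so the Hahn–Banach theorem provides a continuous linear functional
below it. The weighted statement follows because `x ↦ 1 + h ‖x‖` is continuous and positive.
-/

open Filter Topology Set

noncomputable section

/-- Clarke generalized directional derivative of `F` at `x` in direction `v`. -/
def clarkeDeriv {X : Type*} [NormedAddCommGroup X] [NormedSpace ℝ X]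
    (F : X → ℝ) (x v : X) : ℝ :=
  Filter.limsup (fun p : X × ℝ => (F (x + p.1 + p.2 • v) - F (x + p.1)) / p.2)
    ((nhds (0 : X)) ×ˢ (nhdsWithin (0 : ℝ) (Set.Ioi 0)))

/-- Clarke generalized gradient of `F` at `x`. -/
def clarkeSubdiff {X : Type*} [NormedAddCommGroup X] [NormedSpace ℝ X]
    (F : X → ℝ) (x : X) : Set (X →L[ℝ] ℝ) :=
  {w | ∀ v, w v ≤ clarkeDeriv F x v}

/-- `λ_F(x) = min_{w* ∈ ∂F(x)} ‖w*‖`. -/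
def lambdaF {X : Type*} [NormedAddCommGroup X] [NormedSpace ℝ X]
    (F : X → ℝ) (x : X) : ℝ :=
  sInf ((fun w : X →L[ℝ] ℝ => ‖w‖) '' clarkeSubdiff F x)

/-- The weighted Chang Palais–Smale condition for the weight `h`. -/
def WeightedChangPS {X : Type*} [NormedAddCommGroup X] [NormedSpace ℝ X]
    (F : X → ℝ) (h : ℝ → ℝ) : Prop :=
  ∀ x : ℕ → X, (∃ C : ℝ, ∀ n, |F (x n)| ≤ C) →
    Filter.Tendsto (fun n => lambdaF F (x n) * (1 + h ‖x n‖)) Filter.atTop (nhds 0) →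
    ∃ (z : X) (φ : ℕ → ℕ), StrictMono φ ∧
      Filter.Tendsto (fun n => x (φ n)) Filter.atTop (nhds z)

/-- The Banach constant `Sur A = inf_{‖v*‖=1} ‖A* v*‖`. -/
def surBanach {X Y : Type*} [NormedAddCommGroup X] [NormedSpace ℝ X]
    [NormedAddCommGroup Y] [NormedSpace ℝ Y] (A : X →L[ℝ] Y) : ℝ :=
  sInf ((fun v : Y →L[ℝ] ℝ => ‖v.comp A‖) '' {v : Y →L[ℝ] ℝ | ‖v‖ = 1})

/-- Norm-coercivity: `‖f x‖ → ∞` as `‖x‖ → ∞`. -/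
def NormCoercive {X Y : Type*} [NormedAddCommGroup X] [NormedAddCommGroup Y]
    (f : X → Y) : Prop :=
  Filter.Tendsto (fun x => ‖f x‖) (Filter.comap (fun x : X => ‖x‖) Filter.atTop) Filter.atTop

/-- The difference quotient whose upper limit at `(x, 0⁺)` is `F⁰(x; v)`, as a function of the base
point `z.1` and the step `z.2`. -/
def clarkeQuot {X : Type*} [NormedAddCommGroup X] [NormedSpace ℝ X]
    (F : X → ℝ) (v : X) (z : X × ℝ) : ℝ :=
  (F (z.1 + z.2 • v) - F z.1) / z.2

section Clarke

variable {X : Type*} [NormedAddCommGroup X] [NormedSpace ℝ X] {F : X → ℝ}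

lemma clarkeDeriv_eq_limsup (F : X → ℝ) (x v : X) :
    clarkeDeriv F x v = limsup (clarkeQuot F v) (𝓝 x ×ˢ 𝓝[>] (0 : ℝ)) := by
  have h : map (fun p : X × ℝ => (x + p.1, p.2)) (𝓝 (0 : X) ×ˢ 𝓝[>] (0 : ℝ))
      = 𝓝 x ×ˢ 𝓝[>] (0 : ℝ) := by
    have h1 : map (fun y : X => x + y) (𝓝 0) = 𝓝 x := by simp
    have h2 := Filter.prod_map_map_eq (f₁ := 𝓝 (0 : X)) (f₂ := 𝓝[>] (0 : ℝ))
      (m₁ := fun y : X => x + y) (m₂ := id)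
    rw [h1, map_id] at h2
    exact h2.symm
  rw [← h, ← Filter.limsup_comp]
  rfl

/-- The map `(y, t) ↦ (y + t • v, t)` preserves convergence to `(x, 0⁺)`. -/
lemma tendsto_shift (x v : X) :
    Tendsto (fun z : X × ℝ => (z.1 + z.2 • v, z.2)) (𝓝 x ×ˢ 𝓝[>] (0 : ℝ))
      (𝓝 x ×ˢ 𝓝[>] (0 : ℝ)) := by
  refine Tendsto.prodMk ?_ tendsto_snd
  have h2 : Tendsto (fun z : X × ℝ => z.2) (𝓝 x ×ˢ 𝓝[>] (0 : ℝ)) (𝓝 0) :=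
    tendsto_snd.mono_right nhdsWithin_le_nhds
  simpa using tendsto_fst.add (h2.smul_const v)

lemma eventually_step_pos {X : Type*} [NormedAddCommGroup X] (x : X) :
    ∀ᶠ z : X × ℝ in 𝓝 x ×ˢ 𝓝[>] (0 : ℝ), 0 < z.2 :=
  tendsto_snd.eventually (eventually_mem_nhdsWithin (a := (0 : ℝ)) (s := Ioi 0))

lemma exists_quot_bound (hF : LocallyLipschitz F) (x : X) :
    ∃ K : ℝ, ∀ v, ∀ᶠ z in 𝓝 x ×ˢ 𝓝[>] (0 : ℝ), |clarkeQuot F v z| ≤ K * ‖v‖ := by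
  obtain ⟨K, s, hs, hK⟩ := hF x
  refine ⟨K, fun v => ?_⟩
  have h1 : ∀ᶠ z : X × ℝ in 𝓝 x ×ˢ 𝓝[>] (0 : ℝ), z.1 ∈ s := tendsto_fst.eventually hs
  have h2 := (tendsto_shift x v).eventually h1
  filter_upwards [h1, h2, eventually_step_pos x] with z hz1 hz2 hz
  have h := hK.dist_le_mul _ hz2 _ hz1
  simp only [dist_eq_norm, add_sub_cancel_left, norm_smul, Real.norm_eq_abs, abs_of_pos hz] at h
  rw [clarkeQuot, abs_div, abs_of_pos hz, div_le_iff₀ hz]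
  linarith

lemma isBoundedUnder_quot (hF : LocallyLipschitz F) (x v : X) :
    IsBoundedUnder (· ≤ ·) (𝓝 x ×ˢ 𝓝[>] (0 : ℝ)) (clarkeQuot F v) := by
  obtain ⟨K, hK⟩ := exists_quot_bound hF x
  exact ⟨K * ‖v‖, (hK v).mono fun z hz => (abs_le.1 hz).2⟩

lemma isCoboundedUnder_quot (hF : LocallyLipschitz F) (x v : X) :
    IsCoboundedUnder (· ≤ ·) (𝓝 x ×ˢ 𝓝[>] (0 : ℝ)) (clarkeQuot F v) := by
  obtain ⟨K, hK⟩ := exists_quot_bound hF x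
  have : IsBoundedUnder (· ≥ ·) (𝓝 x ×ˢ 𝓝[>] (0 : ℝ)) (clarkeQuot F v) :=
    ⟨-(K * ‖v‖), (hK v).mono fun z hz => (abs_le.1 hz).1⟩
  exact this.isCoboundedUnder_le

lemma clarkeDeriv_le (hF : LocallyLipschitz F) {x v : X} {c : ℝ}
    (h : ∀ᶠ z in 𝓝 x ×ˢ 𝓝[>] (0 : ℝ), clarkeQuot F v z ≤ c) : clarkeDeriv F x v ≤ c := by
  rw [clarkeDeriv_eq_limsup]
  exact limsup_le_of_le (isCoboundedUnder_quot hF x v) h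

lemma eventually_quot_lt (hF : LocallyLipschitz F) {x v : X} {c : ℝ}
    (h : clarkeDeriv F x v < c) :
    ∀ᶠ z in 𝓝 x ×ˢ 𝓝[>] (0 : ℝ), clarkeQuot F v z < c := by
  rw [clarkeDeriv_eq_limsup] at h
  exact eventually_lt_of_limsup_lt h (isBoundedUnder_quot hF x v)

/-- Upper semicontinuity of `y ↦ F⁰(y; v)`. -/
lemma eventually_clarkeDeriv_le (hF : LocallyLipschitz F) {x v : X} {c : ℝ}
    (h : clarkeDeriv F x v < c) : ∀ᶠ y in 𝓝 x, clarkeDeriv F y v ≤ c := by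
  obtain ⟨pa, ha, pb, hb, hab⟩ := eventually_prod_iff.1 (eventually_quot_lt hF h)
  filter_upwards [eventually_eventually_nhds.2 ha] with y hy
  exact clarkeDeriv_le hF
    (eventually_prod_iff.2 ⟨pa, hy, pb, hb, fun hp _ hq => (hab hp hq).le⟩)

lemma clarkeDeriv_add_le (hF : LocallyLipschitz F) (x u v : X) :
    clarkeDeriv F x (u + v) ≤ clarkeDeriv F x u + clarkeDeriv F x v := by
  refine le_of_forall_pos_le_add fun ε hε => ?_
  have hu := eventually_quot_lt hF (lt_add_of_pos_right (clarkeDeriv F x u) (half_pos hε))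
  have hv := eventually_quot_lt hF (lt_add_of_pos_right (clarkeDeriv F x v) (half_pos hε))
  apply clarkeDeriv_le hF
  -- split the increment along `u + v` at the intermediate point `z.1 + z.2 • v`
  filter_upwards [(tendsto_shift x v).eventually hu, hv] with z h1 h2
  have h : clarkeQuot F (u + v) z
      = clarkeQuot F u (z.1 + z.2 • v, z.2) + clarkeQuot F v z := by
    have e : z.1 + z.2 • (u + v) = z.1 + z.2 • v + z.2 • u := by rw [smul_add]; abel
    simp only [clarkeQuot, e]
    ring
  linarith

lemma clarkeDeriv_smul_le (hF : LocallyLipschitz F) (x v : X) {c : ℝ} (hc : 0 < c) :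
    clarkeDeriv F x (c • v) ≤ c * clarkeDeriv F x v := by
  refine le_of_forall_pos_le_add fun ε hε => ?_
  have hv := eventually_quot_lt hF (lt_add_of_pos_right (clarkeDeriv F x v) (div_pos hε hc))
  have ht : Tendsto (fun z : X × ℝ => (z.1, c * z.2)) (𝓝 x ×ˢ 𝓝[>] (0 : ℝ))
      (𝓝 x ×ˢ 𝓝[>] (0 : ℝ)) := by
    refine tendsto_fst.prodMk (tendsto_nhdsWithin_iff.2 ⟨?_, ?_⟩)
    · have h2 : Tendsto (fun z : X × ℝ => z.2) (𝓝 x ×ˢ 𝓝[>] (0 : ℝ)) (𝓝 0) :=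
        tendsto_snd.mono_right nhdsWithin_le_nhds
      simpa using h2.const_mul c
    · exact (eventually_step_pos x).mono fun z hz => mul_pos hc hz
  apply clarkeDeriv_le hF
  filter_upwards [ht.eventually hv, eventually_step_pos x] with z h1 hz
  have h : clarkeQuot F (c • v) z = c * clarkeQuot F v (z.1, c * z.2) := by
    simp only [clarkeQuot, smul_smul, mul_comm z.2 c]
    field_simp
  have h2 := mul_lt_mul_of_pos_left h1 hc
  rw [mul_add, mul_div_cancel₀ _ hc.ne'] at h2
  linarith

lemma clarkeDeriv_smul (hF : LocallyLipschitz F) (x v : X) {c : ℝ} (hc : 0 < c) :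
    clarkeDeriv F x (c • v) = c * clarkeDeriv F x v := by
  refine le_antisymm (clarkeDeriv_smul_le hF x v hc) ?_
  have h := clarkeDeriv_smul_le hF x (c • v) (inv_pos.2 hc)
  rwa [inv_smul_smul₀ hc.ne', le_inv_mul_iff₀ hc] at h

lemma clarkeSubdiff_nonempty (hF : LocallyLipschitz F) (x : X) :
    (clarkeSubdiff F x).Nonempty := by
  obtain ⟨K, hK⟩ := exists_quot_bound hF x
  have hb : ∀ v, clarkeDeriv F x v ≤ K * ‖v‖ := fun v =>
    clarkeDeriv_le hF ((hK v).mono fun z hz => (abs_le.1 hz).2)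
  -- Hahn–Banach, extending the zero functional on the zero subspace
  obtain ⟨g, -, hg⟩ := exists_extension_of_le_sublinear (⊥ : X →ₗ.[ℝ] ℝ) (clarkeDeriv F x)
    (fun c hc v => clarkeDeriv_smul hF x v hc) (clarkeDeriv_add_le hF x) (by
      rintro ⟨v, hv⟩
      obtain rfl : v = 0 := (Submodule.mem_bot ℝ).1 hv
      have h0 := clarkeDeriv_smul hF x 0 (c := 2) (by norm_num)
      rw [smul_zero] at h0
      have h1 : (⊥ : X →ₗ.[ℝ] ℝ) ⟨0, hv⟩ = 0 := LinearPMap.map_zero _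
      rw [h1]
      change 0 ≤ clarkeDeriv F x 0
      linarith)
  refine ⟨g.mkContinuous K fun v => ?_, fun v => hg v⟩
  rw [Real.norm_eq_abs, abs_le]
  have h1 := (hg v).trans (hb v)
  have h2 := (hg (-v)).trans (hb (-v))
  rw [map_neg, norm_neg] at h2
  exact ⟨by linarith, h1⟩

lemma lambdaF_le {x : X} {w : X →L[ℝ] ℝ} (hw : w ∈ clarkeSubdiff F x) : lambdaF F x ≤ ‖w‖ :=
  csInf_le ⟨0, by rintro _ ⟨w, -, rfl⟩; exact norm_nonneg w⟩ ⟨w, hw, rfl⟩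

/-- Subgradients of norm at most `c` at points arbitrarily close to `x` have a weak-* limit along
an ultrafilter finer than `𝓝 x`, and this limit is a subgradient at `x` of norm at most `c`. -/
lemma lambdaF_le_of_frequently (hF : LocallyLipschitz F) {x : X} {c : ℝ}
    (h : ∃ᶠ y in 𝓝 x, ∃ w ∈ clarkeSubdiff F y, ‖w‖ ≤ c) : lambdaF F x ≤ c := by
  have : NeBot (𝓝 x ⊓ 𝓟 {y | ∃ w ∈ clarkeSubdiff F y, ‖w‖ ≤ c}) :=
    frequently_mem_iff_neBot.1 h
  set U := Ultrafilter.of (𝓝 x ⊓ 𝓟 {y | ∃ w ∈ clarkeSubdiff F y, ‖w‖ ≤ c})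
  have hU : (U : Filter X) ≤ 𝓝 x ⊓ 𝓟 {y | ∃ w ∈ clarkeSubdiff F y, ‖w‖ ≤ c} :=
    Ultrafilter.of_le _
  have hUx : (U : Filter X) ≤ 𝓝 x := hU.trans inf_le_left
  have hUS : ∀ᶠ y in (U : Filter X), ∃ w ∈ clarkeSubdiff F y, ‖w‖ ≤ c :=
    le_principal_iff.1 (hU.trans inf_le_right)
  have hex : ∀ y, ∃ w : WeakDual ℝ X, (∃ w ∈ clarkeSubdiff F y, ‖w‖ ≤ c) →
      WeakDual.toStrongDual w ∈ clarkeSubdiff F y ∧ ‖WeakDual.toStrongDual w‖ ≤ c := by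
    intro y
    by_cases hy : ∃ w ∈ clarkeSubdiff F y, ‖w‖ ≤ c
    · obtain ⟨w, hw⟩ := hy
      exact ⟨StrongDual.toWeakDual w, fun _ => hw⟩
    · exact ⟨0, fun h => absurd h hy⟩
  choose w hw using hex
  obtain ⟨w₀, hw₀, hlim⟩ := (WeakDual.isCompact_closedBall (𝕜 := ℝ) (0 : StrongDual ℝ X) c
    ).ultrafilter_le_nhds (U.map w) (by
      rw [Ultrafilter.coe_map, le_principal_iff, mem_map]
      filter_upwards [hUS] with y hy
      simpa using (hw y hy).2)
  have hw₀' : ‖WeakDual.toStrongDual w₀‖ ≤ c := by simpa using hw₀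
  refine (lambdaF_le (w := WeakDual.toStrongDual w₀) fun v => ?_).trans hw₀'
  refine le_of_forall_gt_imp_ge_of_dense fun b hb => ?_
  have ht : Tendsto (fun y => w y v) (U : Filter X) (𝓝 (w₀ v)) :=
    ((WeakDual.eval_continuous v).tendsto w₀).comp hlim
  refine le_of_tendsto ht ?_
  filter_upwards [hUS, hUx (eventually_clarkeDeriv_le hF hb)] with y hy hyb
  exact ((hw y hy).1 v).trans hyb

lemma lowerSemicontinuous_lambdaF (hF : LocallyLipschitz F) :
    LowerSemicontinuous (lambdaF F) := by
  intro x c hc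
  by_contra hne
  obtain ⟨b, hcb, hb⟩ := exists_between hc
  refine hb.not_ge (lambdaF_le_of_frequently hF ?_)
  refine (not_eventually.1 hne).mono fun y hy => ?_
  -- nonemptiness excludes the junk value `sInf ∅ = 0`
  obtain ⟨_, ⟨w, hw, rfl⟩, hwb⟩ := exists_lt_of_csInf_lt
    ((clarkeSubdiff_nonempty hF y).image fun w : X →L[ℝ] ℝ => ‖w‖) ((not_lt.1 hy).trans_lt hcb)
  exact ⟨w, hw, hwb.le⟩

end Clarke

/-- The product of a lower semicontinuous function and a continuous positive function is lower
semicontinuous. -/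
lemma LowerSemicontinuous.mul_continuous_pos {X : Type*} [TopologicalSpace X] {f g : X → ℝ}
    (hf : LowerSemicontinuous f) (hg : Continuous g) (hpos : ∀ x, 0 < g x) :
    LowerSemicontinuous (fun x => f x * g x) := by
  intro x c hc
  obtain ⟨b, hcb, hb⟩ := exists_between ((div_lt_iff₀ (hpos x)).2 hc)
  have h1 : ∀ᶠ y in 𝓝 x, c / g y < b :=
    (continuousAt_const.div hg.continuousAt (hpos x).ne').eventually_lt continuousAt_const hcb
  filter_upwards [h1, hf x b hb] with y hy1 hy2
  exact (div_lt_iff₀ (hpos y)).1 (hy1.trans hy2)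

theorem lambdaF_lowerSemicontinuous {X : Type*} [NormedAddCommGroup X]
    [NormedSpace ℝ X] [CompleteSpace X]
    (F : X → ℝ) (hF : LocallyLipschitz F) :
    LowerSemicontinuous (lambdaF F) ∧
      ∀ h : ℝ → ℝ, ContinuousOn h (Set.Ici 0) → MonotoneOn h (Set.Ici 0) →
        (∀ t ∈ Set.Ici (0:ℝ), 0 ≤ h t) →
        LowerSemicontinuous (fun x => lambdaF F x * (1 + h ‖x‖)) := by
  refine ⟨lowerSemicontinuous_lambdaF hF, fun h hcont _ hnonneg => ?_⟩
  refine (lowerSemicontinuous_lambdaF hF).mul_continuous_pos ?_ fun x => ?_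
  · exact continuous_const.add
      (hcont.comp_continuous continuous_norm fun x => mem_Ici.2 (norm_nonneg x))
  · have := hnonneg ‖x‖ (mem_Ici.2 (norm_nonneg x))
    linarith
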